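/- Let μ₁, μ₂, ρ₁, ρ₂ > 0 and let z ∈ ℂ satisfy Re z ≥ 0 and Im z ≥ 0. Then each of the six summands of r₂ᵃ(z), namely ((ρ₂/ρ₁)ω₁(z) + (ρ₁/ρ₂)ω₂(z))(ω₁(z)+1)(ω₂(z)+1), 2(ω₁(z)−1)(ω₂(z)−1), 2(μ₂ρ₁/(μ₁ρ₂))(ω₂(z)−1), 2(μ₁ρ₂/(μ₂ρ₁))(ω₁(z)−1), (μ₂ρ₁/(μ₁ρ₂))(ω₂(z)²+1)(ω₂(z)+1), and (μ₁ρ₂/(μ₂ρ₁))(ω₁(z)²+1)(ω₁(z)+1), has nonnegative imaginary part. -/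

import Mathlib

open Complex

/-- `ω(z) = (1 + ρ z/μ)^{1/2}`, principal branch. -/
noncomputable def omegaSym (μ ρ : ℝ) (z : ℂ) : ℂ :=
  (1 + (ρ : ℂ) * z / (μ : ℂ)) ^ ((1 : ℂ)/2)

/-! If `z` lies in the closed first quadrant, so does `ω(z)² - 1`. Taking the principal square root
halves the argument, so `ω(z)` lies in the sector `0 ≤ arg ≤ π/4`, and it does not lower the real
part below `1`. Up to nonnegative real coefficients, each summand is then a product of factors in
this sector or in the quadrant whose opening angles add up to at most `π`. -/

/-- The closed first quadrant of `ℂ`, as a real convex cone: it contains `ω(z) - 1`, and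
products of two of its elements lie in the upper half-plane. -/
noncomputable def closedQuadrant : PointedCone ℝ ℂ :=
  (PointedCone.positive ℝ ℝ).comap reLm ⊓ (PointedCone.positive ℝ ℝ).comap imLm

/-- The sector `0 ≤ arg w ≤ π/4` of `ℂ`, as a real convex cone: the first octant, cut out by the
lines `im w = 0` and `im w = re w`. It contains `ω(z)`. -/
noncomputable def closedOctant : PointedCone ℝ ℂ :=
  (PointedCone.positive ℝ ℝ).comap imLm ⊓ (PointedCone.positive ℝ ℝ).comap (reLm - imLm)

section Cones

variable {u v w : ℂ}

lemma mem_closedQuadrant : w ∈ closedQuadrant ↔ 0 ≤ w.re ∧ 0 ≤ w.im := Iff.rfl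

lemma mem_closedOctant : w ∈ closedOctant ↔ 0 ≤ w.im ∧ w.im ≤ w.re :=
  and_congr_right' <| sub_nonneg (a := w.re)

lemma closedOctant_le_closedQuadrant : closedOctant ≤ closedQuadrant := fun _ hw =>
  have ⟨h_im, h_le⟩ := mem_closedOctant.mp hw
  ⟨h_im.trans h_le, h_im⟩

lemma one_mem_closedOctant : (1 : ℂ) ∈ closedOctant := by
  simp [mem_closedOctant]

lemma ofReal_mul_mem {C : PointedCone ℝ ℂ} {r : ℝ} (hr : 0 ≤ r) (hw : w ∈ C) :
    (r : ℂ) * w ∈ C := by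
  simpa only [real_smul] using C.smul_mem hr hw

lemma im_ofReal_mul_nonneg {r : ℝ} (hr : 0 ≤ r) (hw : 0 ≤ w.im) : 0 ≤ ((r : ℂ) * w).im := by
  simpa only [im_ofReal_mul] using mul_nonneg hr hw

lemma mul_mem_closedQuadrant_of_mem_closedOctant (hu : u ∈ closedOctant) (hv : v ∈ closedOctant) :
    u * v ∈ closedQuadrant := by
  obtain ⟨hu_im, hu_le⟩ := mem_closedOctant.mp hu
  obtain ⟨hv_im, hv_le⟩ := mem_closedOctant.mp hv
  rw [mem_closedQuadrant, mul_re, mul_im, sub_nonneg]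
  constructor
  · exact mul_le_mul hu_le hv_le hv_im (hu_im.trans hu_le)
  · exact add_nonneg (mul_nonneg (hu_im.trans hu_le) hv_im) (mul_nonneg hu_im (hv_im.trans hv_le))

lemma im_mul_nonneg_of_mem_closedQuadrant (hu : u ∈ closedQuadrant) (hv : v ∈ closedQuadrant) :
    0 ≤ (u * v).im := by
  obtain ⟨hu_re, hu_im⟩ := mem_closedQuadrant.mp hu
  obtain ⟨hv_re, hv_im⟩ := mem_closedQuadrant.mp hv
  rw [mul_im]
  exact add_nonneg (mul_nonneg hu_re hv_im) (mul_nonneg hu_im hv_re)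

lemma im_mul_mul_nonneg_of_mem_closedOctant (hu : u ∈ closedOctant) (hv : v ∈ closedOctant)
    (hw : w ∈ closedOctant) : 0 ≤ (u * v * w).im :=
  im_mul_nonneg_of_mem_closedQuadrant (mul_mem_closedQuadrant_of_mem_closedOctant hu hv)
    (closedOctant_le_closedQuadrant hw)

lemma im_sq_add_one_mul_add_one_nonneg (hu : u ∈ closedOctant) :
    0 ≤ ((u ^ 2 + 1) * (u + 1)).im := by
  have h_one : (1 : ℂ) ∈ closedQuadrant := closedOctant_le_closedQuadrant one_mem_closedOctant
  have h_sq : u ^ 2 ∈ closedQuadrant := sq u ▸ mul_mem_closedQuadrant_of_mem_closedOctant hu hu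
  exact im_mul_nonneg_of_mem_closedQuadrant (add_mem h_sq h_one)
    (add_mem (closedOctant_le_closedQuadrant hu) h_one)

end Cones

section SquareRoot

lemma sqrt_re_le_re_cpow_inv_two (w : ℂ) : √w.re ≤ (w ^ (2⁻¹ : ℂ)).re := by
  rw [cpow_inv_two_re]
  exact Real.sqrt_le_sqrt (by linarith [re_le_norm w])

lemma cpow_inv_two_mem_closedOctant {w : ℂ} (hw : w ∈ closedQuadrant) :
    w ^ (2⁻¹ : ℂ) ∈ closedOctant := by
  obtain ⟨hw_re, hw_im⟩ := mem_closedQuadrant.mp hw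
  rw [mem_closedOctant, cpow_inv_two_re, cpow_inv_two_im_eq_sqrt hw_im]
  exact ⟨Real.sqrt_nonneg _, Real.sqrt_le_sqrt (by linarith)⟩

end SquareRoot

section OmegaSym

variable {μ ρ : ℝ} {z : ℂ}

lemma omegaSym_eq_cpow_inv_two (μ ρ : ℝ) (z : ℂ) :
    omegaSym μ ρ z = (1 + ((ρ / μ : ℝ) : ℂ) * z) ^ (2⁻¹ : ℂ) := by
  rw [omegaSym, one_div, ofReal_div, div_mul_eq_mul_div]

lemma omegaSym_mem_closedOctant (h : 0 ≤ ρ / μ) (hz : z ∈ closedQuadrant) :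
    omegaSym μ ρ z ∈ closedOctant := by
  rw [omegaSym_eq_cpow_inv_two]
  exact cpow_inv_two_mem_closedOctant <|
    add_mem (closedOctant_le_closedQuadrant one_mem_closedOctant) (ofReal_mul_mem h hz)

lemma one_le_re_omegaSym (h : 0 ≤ ρ / μ) (hz : 0 ≤ z.re) : 1 ≤ (omegaSym μ ρ z).re := by
  rw [omegaSym_eq_cpow_inv_two]
  refine le_trans ?_ (sqrt_re_le_re_cpow_inv_two _)
  rw [Real.one_le_sqrt, add_re, one_re, re_ofReal_mul]
  exact le_add_of_nonneg_right (mul_nonneg h hz)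

lemma omegaSym_sub_one_mem_closedQuadrant (h : 0 ≤ ρ / μ) (hz : z ∈ closedQuadrant) :
    omegaSym μ ρ z - 1 ∈ closedQuadrant := by
  rw [mem_closedQuadrant, sub_re, sub_im, one_re, one_im, sub_zero, sub_nonneg]
  exact ⟨one_le_re_omegaSym h (mem_closedQuadrant.mp hz).1,
    (mem_closedOctant.mp (omegaSym_mem_closedOctant h hz)).1⟩

end OmegaSym

/-- in the closed first quadrant, each of the six summands of the reduced
Lopatinskii determinant `r₂ᵃ` (from the symbol of `S_λ^{11}`) has nonnegative imaginary part. -/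
theorem r2a_summands_nonneg_im (μ₁ μ₂ ρ₁ ρ₂ : ℝ)
    (hμ₁ : 0 < μ₁) (hμ₂ : 0 < μ₂) (hρ₁ : 0 < ρ₁) (hρ₂ : 0 < ρ₂)
    (z : ℂ) (hre : 0 ≤ z.re) (him : 0 ≤ z.im) :
    0 ≤ ((((ρ₂ : ℂ)/(ρ₁ : ℂ)) * omegaSym μ₁ ρ₁ z + ((ρ₁ : ℂ)/(ρ₂ : ℂ)) * omegaSym μ₂ ρ₂ z) *
          (omegaSym μ₁ ρ₁ z + 1) * (omegaSym μ₂ ρ₂ z + 1)).im ∧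
    0 ≤ (2 * (omegaSym μ₁ ρ₁ z - 1) * (omegaSym μ₂ ρ₂ z - 1)).im ∧
    0 ≤ (2 * (((μ₂ : ℂ) * (ρ₁ : ℂ))/((μ₁ : ℂ) * (ρ₂ : ℂ))) * (omegaSym μ₂ ρ₂ z - 1)).im ∧
    0 ≤ (2 * (((μ₁ : ℂ) * (ρ₂ : ℂ))/((μ₂ : ℂ) * (ρ₁ : ℂ))) * (omegaSym μ₁ ρ₁ z - 1)).im ∧
    0 ≤ ((((μ₂ : ℂ) * (ρ₁ : ℂ))/((μ₁ : ℂ) * (ρ₂ : ℂ))) *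
          ((omegaSym μ₂ ρ₂ z ^ 2 + 1) * (omegaSym μ₂ ρ₂ z + 1))).im ∧
    0 ≤ ((((μ₁ : ℂ) * (ρ₂ : ℂ))/((μ₂ : ℂ) * (ρ₁ : ℂ))) *
          ((omegaSym μ₁ ρ₁ z ^ 2 + 1) * (omegaSym μ₁ ρ₁ z + 1))).im := by
  have hz : z ∈ closedQuadrant := mem_closedQuadrant.mpr ⟨hre, him⟩
  have hk₁ : 0 ≤ ρ₁ / μ₁ := by positivity
  have hk₂ : 0 ≤ ρ₂ / μ₂ := by positivity
  have hr : 0 ≤ ρ₂ / ρ₁ := by positivity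
  have hs : 0 ≤ ρ₁ / ρ₂ := by positivity
  have hp : 0 ≤ (μ₂ * ρ₁) / (μ₁ * ρ₂) := by positivity
  have hq : 0 ≤ (μ₁ * ρ₂) / (μ₂ * ρ₁) := by positivity
  have hω₁ := omegaSym_mem_closedOctant hk₁ hz
  have hω₂ := omegaSym_mem_closedOctant hk₂ hz
  have hω₁' := omegaSym_sub_one_mem_closedQuadrant hk₁ hz
  have hω₂' := omegaSym_sub_one_mem_closedQuadrant hk₂ hz
  refine ⟨?_, ?_, ?_, ?_, ?_, ?_⟩
  · exact_mod_cast im_mul_mul_nonneg_of_mem_closedOctant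
      (add_mem (ofReal_mul_mem hr hω₁) (ofReal_mul_mem hs hω₂))
      (add_mem hω₁ one_mem_closedOctant) (add_mem hω₂ one_mem_closedOctant)
  · exact im_mul_nonneg_of_mem_closedQuadrant (ofReal_mul_mem zero_le_two hω₁') hω₂'
  · exact_mod_cast im_ofReal_mul_nonneg (mul_nonneg zero_le_two hp) (mem_closedQuadrant.mp hω₂').2
  · exact_mod_cast im_ofReal_mul_nonneg (mul_nonneg zero_le_two hq) (mem_closedQuadrant.mp hω₁').2
  · exact_mod_cast im_ofReal_mul_nonneg hp (im_sq_add_one_mul_add_one_nonneg hω₂)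
  · exact_mod_cast im_ofReal_mul_nonneg hq (im_sq_add_one_mul_add_one_nonneg hω₁)
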